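/- The SPS occupancy chain possesses exactly one stationary probability mass function: there exists a unique probability mass function π on S such that π(d) = Σ_{c ∈ S} π(c)·P(d | c) for all d ∈ S. -/

import Mathlib

open Finset

/-- The set of empty slots of a state `c ∈ {0,…,m−1}^V`. -/
def emptyS (V m : ℕ) (c : Fin V → Fin m) : Finset (Fin m) :=
  Finset.univ \ Finset.univ.image c

/-- One-step transition probability of the SPS occupancy chain:
`P(d | c) = ∏_u [(1−p_E)·1{d_u = c_u} + (p_E / N(c))·1{d_u ∈ E(c)}]`. -/
noncomputable def spsP (V m : ℕ) (pE : ℝ) (c d : Fin V → Fin m) : ℝ :=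
  ∏ u : Fin V,
    ((1 - pE) * (if d u = c u then 1 else 0) +
      (pE / ((emptyS V m c).card : ℝ)) * (if d u ∈ emptyS V m c then 1 else 0))

/-- A finite stochastic matrix has a stationary probability vector. -/
theorem stoch_exists {S : Type*} [Fintype S] [DecidableEq S] [Nonempty S] (P : S → S → ℝ)
    (h0 : ∀ c d, 0 ≤ P c d) (h1 : ∀ c, ∑ d, P c d = 1) :
    ∃ π : S → ℝ, (∀ c, 0 ≤ π c) ∧ ∑ c, π c = 1 ∧ ∀ d, π d = ∑ c, π c * P c d := by
  have hdet : (Matrix.of P - 1).det = 0 := by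
    rw [← Matrix.exists_mulVec_eq_zero_iff]
    refine ⟨fun _ => 1, ?_, ?_⟩
    · intro h
      have := congrFun h (Classical.arbitrary S)
      simp at this
    · ext c
      rw [Matrix.sub_mulVec]
      simp [Matrix.mulVec, dotProduct, h1, Matrix.one_apply]
  obtain ⟨v, hv, hv0⟩ := Matrix.exists_vecMul_eq_zero_iff.mpr hdet
  have hfix : ∀ d, v d = ∑ c, v c * P c d := by
    intro d
    have := congrFun hv0 d
    rw [Matrix.vecMul_sub, Matrix.vecMul_one] at this
    simp [Matrix.vecMul, dotProduct] at this
    linarith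
  have hle : ∀ d, |v d| ≤ ∑ c, |v c| * P c d := by
    intro d
    calc |v d| = |∑ c, v c * P c d| := by rw [← hfix d]
      _ ≤ ∑ c, |v c * P c d| := Finset.abs_sum_le_sum_abs _ _
      _ = _ := by simp only [abs_mul, abs_of_nonneg (h0 _ _)]
  have hsum : ∑ d, |v d| = ∑ d, ∑ c, |v c| * P c d := by
    rw [Finset.sum_comm]
    simp only [← Finset.mul_sum, h1, mul_one]
  have heq := (Finset.sum_eq_sum_iff_of_le (fun d _ => hle d)).mp hsum
  obtain ⟨a, ha⟩ := Function.ne_iff.mp hv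
  have hpos : 0 < ∑ d, |v d| :=
    Finset.sum_pos' (fun d _ => abs_nonneg _) ⟨a, Finset.mem_univ _, abs_pos.mpr ha⟩
  refine ⟨fun c => |v c| / ∑ d, |v d|, fun c => by positivity, ?_, ?_⟩
  · rw [← Finset.sum_div, div_self hpos.ne']
  · intro d
    simp only [div_mul_eq_mul_div]
    rw [← Finset.sum_div, ← heq d (Finset.mem_univ _)]

/-- Doeblin: a stochastic matrix with a strictly positive column contracts zero-sum vectors, so
a zero-sum fixed vector vanishes. -/
theorem doeblin_zero {S : Type*} [Fintype S] [DecidableEq S] (Q : S → S → ℝ)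
    (h0 : ∀ c d, 0 ≤ Q c d) (h1 : ∀ c, ∑ d, Q c d = 1) (s : S) (hs : ∀ c, 0 < Q c s)
    (w : S → ℝ) (hw : ∑ c, w c = 0) (hfix : ∀ d, w d = ∑ c, w c * Q c d) : ∀ c, w c = 0 := by
  obtain ⟨b, -, hb⟩ := Finset.exists_min_image Finset.univ (fun c => Q c s) ⟨s, Finset.mem_univ s⟩
  set δ := Q b s with hδ
  have hδ0 : 0 < δ := hs b
  have hR : ∀ c d, 0 ≤ Q c d - (if d = s then δ else 0) := by
    intro c d
    split_ifs with h
    · subst h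
      exact sub_nonneg.mpr (hb c (Finset.mem_univ _))
    · simpa using h0 c d
  have hle : ∀ d, |w d| ≤ ∑ c, |w c| * (Q c d - (if d = s then δ else 0)) := by
    intro d
    have e : w d = ∑ c, w c * (Q c d - (if d = s then δ else 0)) := by
      simp only [mul_sub, Finset.sum_sub_distrib, ← Finset.sum_mul, hw, zero_mul, sub_zero]
      exact hfix d
    calc |w d| = |∑ c, w c * (Q c d - (if d = s then δ else 0))| := by rw [← e]
      _ ≤ ∑ c, |w c * (Q c d - (if d = s then δ else 0))| := Finset.abs_sum_le_sum_abs _ _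
      _ = _ := by simp only [abs_mul, abs_of_nonneg (hR _ _)]
  have hsum : ∑ d, |w d| ≤ (∑ c, |w c|) * (1 - δ) := by
    calc ∑ d, |w d| ≤ ∑ d, ∑ c, |w c| * (Q c d - (if d = s then δ else 0)) :=
          Finset.sum_le_sum fun d _ => hle d
      _ = (∑ c, |w c|) * (1 - δ) := by
          rw [Finset.sum_comm]
          simp only [← Finset.mul_sum, Finset.sum_sub_distrib, h1, Finset.sum_ite_eq',
            Finset.mem_univ, if_true, ← Finset.sum_mul]
  have hnn : 0 ≤ ∑ c, |w c| := Finset.sum_nonneg fun c _ => abs_nonneg _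
  have hz : ∑ c, |w c| = 0 := by nlinarith
  intro c
  have := (Finset.sum_eq_zero_iff_of_nonneg (fun c _ => abs_nonneg (w c))).mp hz c
    (Finset.mem_univ _)
  exact abs_eq_zero.mp this

theorem emptyS_card_pos (V m : ℕ) (hm : V < m) (c : Fin V → Fin m) :
    0 < (emptyS V m c).card := by
  unfold emptyS
  have h1 := Finset.le_card_sdiff (Finset.univ.image c) (Finset.univ : Finset (Fin m))
  have h2 : (Finset.univ.image c).card ≤ V := by
    simpa using (Finset.card_image_le (s := Finset.univ) (f := c))
  simp only [Finset.card_univ, Fintype.card_fin] at h1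
  omega

theorem spsP_nonneg (V m : ℕ) (pE : ℝ) (hpE0 : 0 < pE) (hpE1 : pE < 1) (c d : Fin V → Fin m) :
    0 ≤ spsP V m pE c d := by
  unfold spsP
  refine Finset.prod_nonneg fun u _ => ?_
  have : 0 ≤ 1 - pE := by linarith
  positivity

theorem spsP_sum (V m : ℕ) (hm : V < m) (pE : ℝ) (c : Fin V → Fin m) :
    ∑ d, spsP V m pE c d = 1 := by
  have hN : ((emptyS V m c).card : ℝ) ≠ 0 := by
    exact_mod_cast (emptyS_card_pos V m hm c).ne'
  have h := Finset.prod_univ_sum (fun _ : Fin V => (Finset.univ : Finset (Fin m)))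
    (fun u x => ((1 - pE) * (if x = c u then 1 else 0) +
      (pE / ((emptyS V m c).card : ℝ)) * (if x ∈ emptyS V m c then 1 else 0)))
  rw [Fintype.piFinset_univ] at h
  unfold spsP
  rw [← h]
  refine Finset.prod_eq_one fun u _ => ?_
  rw [Finset.sum_add_distrib, ← Finset.mul_sum, ← Finset.mul_sum]
  simp only [Finset.sum_ite_eq', Finset.mem_univ, if_true, Finset.sum_boole,
    Finset.filter_mem_eq_inter, Finset.univ_inter]
  field_simp
  ring

theorem spsP_pos_const (V m : ℕ) (hm : V < m) (pE : ℝ) (hpE0 : 0 < pE) (hpE1 : pE < 1)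
    (c : Fin V → Fin m) (e : Fin m) (he : e ∈ emptyS V m c) :
    0 < spsP V m pE c (fun _ => e) := by
  have hN : (0 : ℝ) < ((emptyS V m c).card : ℝ) := by
    exact_mod_cast (emptyS_card_pos V m hm c)
  unfold spsP
  refine Finset.prod_pos fun u _ => ?_
  have : 0 < 1 - pE := by linarith
  simp only [he, if_true]
  positivity

theorem spsP_pos_self (V m : ℕ) (pE : ℝ) (hpE0 : 0 < pE) (hpE1 : pE < 1)
    (c : Fin V → Fin m) : 0 < spsP V m pE c c := by
  unfold spsP
  refine Finset.prod_pos fun u _ => ?_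
  have : 0 < 1 - pE := by linarith
  simp only [if_true]
  positivity

/-- **Existence and uniqueness of the stationary pmf:** the SPS occupancy chain has
exactly one stationary probability mass function. -/
theorem spsP_unique_stationary (V m : ℕ) (hV : 1 ≤ V) (hm : V < m)
    (pE : ℝ) (hpE0 : 0 < pE) (hpE1 : pE < 1) :
    ∃! π : (Fin V → Fin m) → ℝ,
      (∀ c, 0 ≤ π c) ∧ (∑ c : Fin V → Fin m, π c = 1) ∧
      (∀ d, π d = ∑ c : Fin V → Fin m, π c * spsP V m pE c d) := by
  have hm0 : 0 < m := by omega
  have hne : Nonempty (Fin V → Fin m) := ⟨fun _ => ⟨0, hm0⟩⟩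
  have h0 := spsP_nonneg V m pE hpE0 hpE1
  have h1 := spsP_sum V m hm pE
  obtain ⟨π, hπ⟩ := stoch_exists (spsP V m pE) h0 h1
  refine ⟨π, hπ, ?_⟩
  rintro ρ ⟨hρ0, hρ1, hρ⟩
  obtain ⟨hπ0, hπ1, hπ⟩ := hπ
  have hw : ∀ d, ρ d - π d = ∑ c, (ρ c - π c) * spsP V m pE c d := by
    intro d
    simp only [sub_mul, Finset.sum_sub_distrib]
    rw [← hρ d, ← hπ d]
  have key := doeblin_zero (fun c d => ∑ e, spsP V m pE c e * spsP V m pE e d)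
    (fun c d => Finset.sum_nonneg fun e _ => mul_nonneg (h0 _ _) (h0 _ _))
    (fun c => by
      rw [Finset.sum_comm]
      simp only [← Finset.mul_sum, h1, mul_one])
    (fun _ => ⟨0, hm0⟩) ?_ (fun c => ρ c - π c)
    (by rw [Finset.sum_sub_distrib, hρ1, hπ1, sub_self]) ?_
  · funext c
    exact sub_eq_zero.mp (key c)
  · intro c
    suffices h : ∃ e, 0 < spsP V m pE c e ∧ 0 < spsP V m pE e (fun _ => ⟨0, hm0⟩) by
      obtain ⟨e, h2, h3⟩ := h
      exact Finset.sum_pos' (fun e _ => mul_nonneg (h0 _ _) (h0 _ _))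
        ⟨e, Finset.mem_univ _, mul_pos h2 h3⟩
    obtain ⟨e, he⟩ := Finset.card_pos.mp (emptyS_card_pos V m hm c)
    refine ⟨fun _ => e, spsP_pos_const V m hm pE hpE0 hpE1 c e he, ?_⟩
    by_cases hz : e = ⟨0, hm0⟩
    · subst hz
      exact spsP_pos_self V m pE hpE0 hpE1 _
    · refine spsP_pos_const V m hm pE hpE0 hpE1 _ _ ?_
      simp only [emptyS, Finset.mem_sdiff, Finset.mem_univ, Finset.mem_image, true_and]
      rintro ⟨_, h⟩
      exact hz h
  · intro d
    simp only [Finset.mul_sum]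
    rw [Finset.sum_comm]
    simp only [← mul_assoc, ← Finset.sum_mul]
    simp only [← hw]
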